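/- Let G be a graph of maximum degree at most d (d ≥ 3) and M an induced matching of G that is stable under the local-search operation: M is maximal and for every edge e ∈ M and every two distinct edges e', e'' ∈ PC_G(M, e), the edges e' and e'' conflict, i.e., e'' ∈ C_G(e'). Suppose c_G(xy) ≥ f and n_{xy} ≥ g for every edge xy of G, where n_{xy} = |N_G(x) ∩ N_G(y)|. Then |M| ≥ m(G) / (3d² − d − f − ((d+6)/2)·g). -/

import Mathlib

open Classical

variable {V : Type*}

/-- Two edges (as `Sym2 V`) are in conflict: they are at distance at most 2
in the line graph, i.e. they share a vertex or some edge of `G` joins them. -/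
def Conflict (G : SimpleGraph V) (e f : Sym2 V) : Prop :=
  ∃ a ∈ e, ∃ b ∈ f, a = b ∨ G.Adj a b

/-- `C_G(e)`: the set of edges of `G` in conflict with `e` (including `e`). -/
def CSet (G : SimpleGraph V) (e : Sym2 V) : Set (Sym2 V) :=
  {f | f ∈ G.edgeSet ∧ Conflict G e f}

/-- `PC_G(M, e)`: the private conflict edges of `e` with respect to `M`. -/
def PCSet (G : SimpleGraph V) (M : Set (Sym2 V)) (e : Sym2 V) : Set (Sym2 V) :=
  CSet G e \ ⋃ f ∈ M \ {e}, CSet G f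

/-- `M` is an induced matching of `G`. -/
def IsInducedMatching (G : SimpleGraph V) (M : Set (Sym2 V)) : Prop :=
  M ⊆ G.edgeSet ∧ ∀ e ∈ M, ∀ f ∈ M, e ≠ f → ¬ Conflict G e f

/-- `M` is a maximal induced matching of `G`. -/
def IsMaximalInducedMatching (G : SimpleGraph V) (M : Set (Sym2 V)) : Prop :=
  IsInducedMatching G M ∧ ∀ M', IsInducedMatching G M' → M ⊆ M' → M' = M

/-- `M` is stable under the local-search exchange operation: any two distinct
private conflict edges of an edge of `M` conflict with each other. -/
def LSStable (G : SimpleGraph V) (M : Set (Sym2 V)) : Prop :=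
  ∀ e ∈ M, ∀ e' ∈ PCSet G M e, ∀ e'' ∈ PCSet G M e, e' ≠ e'' → e'' ∈ CSet G e'

/-- The edges of `G` with both endpoints in `S`. -/
def edgesWithin (G : SimpleGraph V) (S : Set V) : Set (Sym2 V) :=
  {e | e ∈ G.edgeSet ∧ ∀ a ∈ e, a ∈ S}

/-- The edges of `G` with one endpoint in `S` and the other in `T`. -/
def edgesBetween (G : SimpleGraph V) (S T : Set V) : Set (Sym2 V) :=
  {e | e ∈ G.edgeSet ∧ ∃ a b : V, e = s(a, b) ∧ a ∈ S ∧ b ∈ T}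

/-- `G` has no induced cycle of length 4. -/
def C4Free (G : SimpleGraph V) : Prop :=
  ¬ ∃ a b c d : V, G.Adj a b ∧ G.Adj b c ∧ G.Adj c d ∧ G.Adj d a ∧
      ¬ G.Adj a c ∧ ¬ G.Adj b d ∧ a ≠ c ∧ b ≠ d

/-- `G` has no induced cycle of length 5. -/
def C5Free (G : SimpleGraph V) : Prop :=
  ¬ ∃ a b c d e : V, G.Adj a b ∧ G.Adj b c ∧ G.Adj c d ∧ G.Adj d e ∧ G.Adj e a ∧
      ¬ G.Adj a c ∧ ¬ G.Adj a d ∧ ¬ G.Adj b d ∧ ¬ G.Adj b e ∧ ¬ G.Adj c e ∧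
      a ≠ c ∧ a ≠ d ∧ b ≠ d ∧ b ≠ e ∧ c ≠ e

/-- `G` has no induced `K_{1,3}` (claw). -/
def ClawFree (G : SimpleGraph V) : Prop :=
  ¬ ∃ v a b c : V, G.Adj v a ∧ G.Adj v b ∧ G.Adj v c ∧
      ¬ G.Adj a b ∧ ¬ G.Adj a c ∧ ¬ G.Adj b c ∧ a ≠ b ∧ a ≠ c ∧ b ≠ c

/-
Maximality makes the sets `C(e)`, `e ∈ M`, cover the edges; an edge covered only once is private,
so `2 m(G) ≤ ∑_{e ∈ M} (c(e) + |PC(e)|)`, and it suffices to bound each summand by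
`6d² - 2d - 2f - (d + 6)g`.

Fix `e = xy ∈ M` and let `S = N(x) ∪ N(y)`, so that `C(e)` consists of the edges touching `S`.
Summing degrees over `S` counts the set `E(S)` of edges within `S` twice, whence
`c(e) + |E(S)| ≤ d|S| ≤ 2d² - d g`. A private edge outside `E(S)` runs from
`N(x)` or from `N(y)` to the complement of `S`.

Let `Q` be the set of private edges `αw` with `α ∈ N(x)` and `w ∉ S`, and let `a ∈ N(x)` lie on the
largest number of edges of `Q`. By stability no two private edges form an induced `2K₂`, so an edge
`αw ∈ Q` with no endpoint adjacent to `a` would make the `Q`-neighbours of `a` a proper subset of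
those of `α`. Hence every edge of `Q` touches `N(a)`, and the degree count for the edge `xa`,
refined by the edges at `x` and those from `a` to `N(x) ∩ N(a)`, gives `|Q| ≤ 2d² - d - f - 3g`.
-/

/-- The edges of `G` with at least one endpoint in `S`; for an edge `xy` of `G`, the set `C_G(xy)`
consists of the edges touching `N(x) ∪ N(y)`. -/
def edgesTouching (G : SimpleGraph V) (S : Set V) : Set (Sym2 V) :=
  {e | e ∈ G.edgeSet ∧ ∃ a ∈ e, a ∈ S}

/-- The vertices at distance at least 2 from every edge of `M` other than `e`. When every edge of
`G` conflicts with an edge of `M`, the set `PC_G(M, e)` consists of the edges within this set. -/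
def privateVertices (G : SimpleGraph V) (M : Set (Sym2 V)) (e : Sym2 V) : Set V :=
  {v | ∀ f ∈ M \ {e}, ∀ a ∈ f, a ≠ v ∧ ¬ G.Adj a v}

theorem two_mul_ncard_biUnion_le {ι α : Type*} (s : Finset ι) (A : ι → Set α)
    (hA : ∀ i ∈ s, (A i).Finite) :
    2 * (⋃ i ∈ s, A i).ncard ≤
      ∑ i ∈ s, ((A i).ncard + (A i \ ⋃ j ∈ (s : Set ι) \ {i}, A j).ncard) := by
  set p : ι → Set α := fun i => A i \ ⋃ j ∈ (s : Set ι) \ {i}, A j with hp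
  have hfin : (⋃ i ∈ s, A i).Finite := s.finite_toSet.biUnion hA
  set E : Finset α := hfin.toFinset with hE
  have ncard_eq : ∀ B : Set α, (∃ i ∈ s, B ⊆ A i) → B.ncard = (E.filter (· ∈ B)).card := by
    rintro B ⟨i, hi, hB⟩
    rw [← Set.ncard_coe_finset]
    congr 1
    ext x
    simpa [hE] using fun hx => ⟨i, hi, hB hx⟩
  have swap : ∀ B : ι → Set α, ∑ i ∈ s, (E.filter (· ∈ B i)).card =
      ∑ x ∈ E, (s.filter (x ∈ B ·)).card := fun B =>
    Finset.sum_card_bipartiteAbove_eq_sum_card_bipartiteBelow fun i x => x ∈ B i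
  rw [Finset.sum_add_distrib,
    Finset.sum_congr rfl fun i hi => ncard_eq (A i) ⟨i, hi, subset_rfl⟩,
    Finset.sum_congr rfl fun i hi => ncard_eq (p i) ⟨i, hi, Set.sdiff_subset⟩,
    swap, swap, ← Finset.sum_add_distrib, Set.ncard_eq_toFinset_card _ hfin, mul_comm,
    ← smul_eq_mul]
  refine Finset.card_nsmul_le_sum _ _ _ fun x hx => ?_
  obtain ⟨i, hi, hxi⟩ : ∃ i ∈ s, x ∈ A i := by simpa [hE] using hx
  have pos : ∀ B : ι → Set α, x ∈ B i → 0 < (s.filter (x ∈ B ·)).card := fun B hx =>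
    Finset.card_pos.2 ⟨i, Finset.mem_filter.2 ⟨hi, hx⟩⟩
  by_cases hother : ∃ j ∈ s, j ≠ i ∧ x ∈ A j
  · obtain ⟨j, hj, hji, hxj⟩ := hother
    have : 1 < (s.filter (x ∈ A ·)).card :=
      Finset.one_lt_card.2 ⟨j, by simp [hj, hxj], i, by simp [hi, hxi], hji⟩
    omega
  · have hxp : x ∈ p i := by
      simp only [hp, Set.mem_sdiff, Set.mem_iUnion, not_exists]
      exact ⟨hxi, fun j hj hxj => hother ⟨j, hj.1, hj.2, hxj⟩⟩
    exact Nat.add_le_add (pos A hxi) (pos p hxp)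

section Conflict

variable {G : SimpleGraph V} {M : Set (Sym2 V)}

theorem Conflict.refl (G : SimpleGraph V) (e : Sym2 V) : Conflict G e e :=
  ⟨_, e.out_fst_mem, _, e.out_fst_mem, .inl rfl⟩

theorem Conflict.symm {e f : Sym2 V} : Conflict G e f → Conflict G f e :=
  fun ⟨a, ha, b, hb, hab⟩ => ⟨b, hb, a, ha, hab.imp Eq.symm SimpleGraph.Adj.symm⟩

theorem CSet_eq_edgesTouching {x y : V} (hxy : G.Adj x y) :
    CSet G s(x, y) = edgesTouching G (G.neighborSet x ∪ G.neighborSet y) := by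
  ext e
  refine and_congr_right fun _ => ⟨?_, ?_⟩
  · rintro ⟨a, ha, b, hb, hab⟩
    refine ⟨b, hb, ?_⟩
    rcases Sym2.mem_iff.1 ha with rfl | rfl <;> rcases hab with rfl | hab
    · exact .inr hxy.symm
    · exact .inl hab
    · exact .inl hxy
    · exact .inr hab
  · rintro ⟨b, hb, hxb | hyb⟩
    · exact ⟨x, Sym2.mem_mk_left x y, b, hb, .inr hxb⟩
    · exact ⟨y, Sym2.mem_mk_right x y, b, hb, .inr hyb⟩

theorem IsMaximalInducedMatching.edgeSet_subset_biUnion_CSet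
    (hM : IsMaximalInducedMatching G M) : G.edgeSet ⊆ ⋃ e ∈ M, CSet G e := by
  intro h hh
  by_contra hnot
  have hfree : ∀ e ∈ M, ¬ Conflict G e h := fun e he hc =>
    hnot (Set.mem_biUnion he ⟨hh, hc⟩)
  have hinsert : IsInducedMatching G (insert h M) := by
    refine ⟨Set.insert_subset hh hM.1.1, ?_⟩
    rintro e (rfl | he) f (rfl | hf) hne
    · exact absurd rfl hne
    · exact fun hc => hfree f hf hc.symm
    · exact hfree e he
    · exact hM.1.2 e he f hf hne
  have hmem : h ∈ M := hM.2 _ hinsert (Set.subset_insert h M) ▸ Set.mem_insert h M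
  exact hfree h hmem (.refl G h)

theorem PCSet_eq_edgesWithin_privateVertices (hM : G.edgeSet ⊆ ⋃ e ∈ M, CSet G e) (e : Sym2 V) :
    PCSet G M e = edgesWithin G (privateVertices G M e) := by
  ext h
  constructor
  · rintro ⟨⟨hh, -⟩, hnot⟩
    refine ⟨hh, fun v hv f hf a ha => not_or.1 fun hav => ?_⟩
    exact hnot (Set.mem_biUnion hf ⟨hh, a, ha, v, hv, hav⟩)
  · rintro ⟨hh, hpriv⟩
    have hnot : ∀ f ∈ M \ {e}, h ∉ CSet G f := fun f hf ⟨_, a, ha, v, hv, hav⟩ =>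
      not_or.2 (hpriv v hv f hf a ha) hav
    obtain ⟨f, hf, hhf⟩ := Set.mem_iUnion₂.1 (hM hh)
    obtain rfl : f = e := by_contra fun hfe => hnot f ⟨hf, hfe⟩ hhf
    refine ⟨hhf, fun hmem => ?_⟩
    obtain ⟨f', hf', hhf'⟩ := Set.mem_iUnion₂.1 hmem
    exact hnot f' hf' hhf'

end Conflict

theorem mk_mem_edgesWithin {G : SimpleGraph V} {S : Set V} {a b : V} :
    s(a, b) ∈ edgesWithin G S ↔ G.Adj a b ∧ a ∈ S ∧ b ∈ S :=
  and_congr_right fun _ => Sym2.ball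

theorem edgesWithin_subset_edgesTouching (G : SimpleGraph V) (S : Set V) :
    edgesWithin G S ⊆ edgesTouching G S :=
  fun e he => ⟨he.1, _, e.out_fst_mem, he.2 _ e.out_fst_mem⟩

theorem edgesWithin_subset_of_subset_edgesTouching_union {G : SimpleGraph V} {U A B : Set V}
    (hU : edgesWithin G U ⊆ edgesTouching G (A ∪ B)) :
    edgesWithin G U ⊆ edgesWithin G (A ∪ B) ∪
      (edgesWithin G U ∩ edgesBetween G A (A ∪ B)ᶜ ∪
        edgesWithin G U ∩ edgesBetween G B (A ∪ B)ᶜ) := by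
  intro e he
  obtain ⟨hadj, v, hv, hvAB⟩ := hU he
  obtain ⟨w, rfl⟩ := Sym2.mem_iff_exists.1 hv
  by_cases hw : w ∈ A ∪ B
  · exact .inl (mk_mem_edgesWithin.2 ⟨hadj, hvAB, hw⟩)
  · exact .inr (hvAB.imp (fun h => ⟨he, hadj, v, w, rfl, h, hw⟩)
      fun h => ⟨he, hadj, v, w, rfl, h, hw⟩)

theorem incidenceSet_union_image_subset_edgesWithin {G : SimpleGraph V} {x a : V}
    (hxa : G.Adj x a) :
    G.incidenceSet x ∪ (s(a, ·)) '' (G.neighborSet x ∩ G.neighborSet a) ⊆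
      edgesWithin G (G.neighborSet x ∪ G.neighborSet a) := by
  rintro _ (⟨he, hx⟩ | ⟨t, ⟨hxt, hat⟩, rfl⟩)
  · obtain ⟨t, rfl⟩ := Sym2.mem_iff_exists.1 hx
    exact mk_mem_edgesWithin.2 ⟨he, .inr hxa.symm, .inl he⟩
  · exact mk_mem_edgesWithin.2 ⟨hat, .inl hxa, .inl hxt⟩

section LocallyFinite

variable {G : SimpleGraph V} [G.LocallyFinite]

theorem finite_edgesTouching {S : Set V} (hS : S.Finite) : (edgesTouching G S).Finite := by
  refine (hS.biUnion fun v _ => (G.incidenceSet v).toFinite).subset ?_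
  rintro e ⟨he, v, hve, hvS⟩
  exact Set.mem_biUnion hvS ⟨he, hve⟩

theorem ncard_neighborSet (v : V) : (G.neighborSet v).ncard = G.degree v := by
  rw [Set.ncard_eq_toFinset_card', SimpleGraph.degree, SimpleGraph.neighborFinset]

theorem ncard_incidenceSet (v : V) : (G.incidenceSet v).ncard = G.degree v := by
  rw [Set.ncard_eq_toFinset_card', ← SimpleGraph.card_incidenceFinset_eq_degree,
    SimpleGraph.incidenceFinset]

theorem ncard_edgesTouching_add_ncard_edgesWithin (S : Finset V) :
    (edgesTouching G S).ncard + (edgesWithin G S).ncard = ∑ v ∈ S, G.degree v := by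
  have hfin := finite_edgesTouching (G := G) S.finite_toSet
  set E : Finset (Sym2 V) := hfin.toFinset with hE
  have degree_eq : ∀ v ∈ S, G.degree v = (E.filter (v ∈ ·)).card := by
    intro v hv
    rw [← G.card_incidenceFinset_eq_degree v]
    congr 1
    ext e
    simp only [SimpleGraph.mem_incidenceFinset, Finset.mem_filter, hE, Set.Finite.mem_toFinset]
    exact ⟨fun h => ⟨⟨h.1, v, h.2, hv⟩, h.2⟩, fun h => ⟨h.1.1, h.2⟩⟩
  have within_eq : (edgesWithin G S).ncard = (E.filter (∀ v ∈ ·, v ∈ S)).card := by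
    rw [← Set.ncard_coe_finset]
    congr 1
    ext e
    simp only [Finset.coe_filter, hE, Set.Finite.mem_toFinset]
    exact ⟨fun h => ⟨edgesWithin_subset_edgesTouching G S h, h.2⟩, fun h => ⟨h.1.1, h.2⟩⟩
  have swap : ∑ v ∈ S, (E.filter (v ∈ ·)).card = ∑ e ∈ E, (S.filter (· ∈ e)).card :=
    Finset.sum_card_bipartiteAbove_eq_sum_card_bipartiteBelow fun (v : V) (e : Sym2 V) => v ∈ e
  rw [Finset.sum_congr rfl degree_eq, swap, within_eq, Set.ncard_eq_toFinset_card _ hfin,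
    Finset.card_eq_sum_ones, Finset.card_filter, ← Finset.sum_add_distrib]
  refine Finset.sum_congr rfl fun e he => ?_
  obtain ⟨hadj, htouch⟩ := hfin.mem_toFinset.1 he
  induction e with | _ a b
  have hinter : S.filter (· ∈ s(a, b)) = {a, b} ∩ S := by
    ext v
    simp [and_comm]
  have hab : a ≠ b := SimpleGraph.Adj.ne hadj
  rw [hinter]
  by_cases ha : a ∈ S <;> by_cases hb : b ∈ S <;>
    simp_all [Finset.insert_inter_of_mem, Finset.insert_inter_of_notMem]

theorem ncard_edgesTouching_add_ncard_edgesWithin_le {d : ℕ} (hΔ : ∀ v, G.degree v ≤ d)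
    {S : Set V} (hS : S.Finite) :
    (edgesTouching G S).ncard + (edgesWithin G S).ncard ≤ d * S.ncard := by
  lift S to Finset V using hS
  grw [ncard_edgesTouching_add_ncard_edgesWithin, Finset.sum_le_card_nsmul S _ d fun v _ => hΔ v,
    Set.ncard_coe_finset, smul_eq_mul, mul_comm]

theorem ncard_edgesBetween_add_sum_le (T : Finset V) (W : Set V) :
    (edgesBetween G T W).ncard + ∑ t ∈ T, (G.neighborSet t \ W).ncard ≤ ∑ t ∈ T, G.degree t := by
  have hsub : edgesBetween G T W ⊆ ⋃ t ∈ T, (s(t, ·)) '' (G.neighborSet t ∩ W) := by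
    rintro _ ⟨he, t, w, rfl, ht, hw⟩
    exact Set.mem_biUnion ht ⟨w, ⟨he, hw⟩, rfl⟩
  have hle : (edgesBetween G T W).ncard ≤ ∑ t ∈ T, (G.neighborSet t ∩ W).ncard := calc
    _ ≤ (⋃ t ∈ T, (s(t, ·)) '' (G.neighborSet t ∩ W)).ncard :=
      Set.ncard_le_ncard hsub (T.finite_toSet.biUnion fun t _ => Set.toFinite _)
    _ ≤ ∑ t ∈ T, ((s(t, ·)) '' (G.neighborSet t ∩ W)).ncard := T.set_ncard_biUnion_le _
    _ ≤ _ := Finset.sum_le_sum fun t _ => Set.ncard_image_le (Set.toFinite _)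
  calc
    _ ≤ ∑ t ∈ T, ((G.neighborSet t ∩ W).ncard + (G.neighborSet t \ W).ncard) := by
      rw [Finset.sum_add_distrib]
      exact Nat.add_le_add_right hle _
    _ = ∑ t ∈ T, G.degree t := Finset.sum_congr rfl fun t _ => by
      rw [Set.ncard_inter_add_ncard_sdiff_eq_ncard _ _ (Set.toFinite _), ncard_neighborSet]

theorem finite_edgesWithin {S : Set V} (hS : S.Finite) : (edgesWithin G S).Finite :=
  (finite_edgesTouching hS).subset (edgesWithin_subset_edgesTouching G S)

theorem finite_CSet {e : Sym2 V} (he : e ∈ G.edgeSet) : (CSet G e).Finite := by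
  induction e with | _ x y
  rw [CSet_eq_edgesTouching he]
  exact finite_edgesTouching (Set.toFinite _)

theorem ncard_CSet_add_ncard_edgesWithin_union_le {d : ℕ} (hΔ : ∀ v, G.degree v ≤ d) {x y : V}
    (hxy : G.Adj x y) :
    (CSet G s(x, y)).ncard + (edgesWithin G (G.neighborSet x ∪ G.neighborSet y)).ncard +
      d * (G.neighborSet x ∩ G.neighborSet y).ncard ≤ d * (G.degree x + G.degree y) := by
  have hfin : ∀ v, (G.neighborSet v).Finite := fun v => Set.toFinite _
  have hdouble := ncard_edgesTouching_add_ncard_edgesWithin_le hΔ ((hfin x).union (hfin y))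
  rw [CSet_eq_edgesTouching hxy, ← ncard_neighborSet, ← ncard_neighborSet,
    ← Set.ncard_union_add_ncard_inter _ _ (hfin x) (hfin y), mul_add]
  exact Nat.add_le_add_right hdouble _

theorem ncard_incidenceSet_union_image {x a : V} (hxa : x ≠ a) :
    (G.incidenceSet x ∪ (s(a, ·)) '' (G.neighborSet x ∩ G.neighborSet a)).ncard =
      G.degree x + (G.neighborSet x ∩ G.neighborSet a).ncard := by
  have hdisj : Disjoint (G.incidenceSet x)
      ((s(a, ·)) '' (G.neighborSet x ∩ G.neighborSet a)) := by
    rw [Set.disjoint_left]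
    rintro _ ⟨-, hx⟩ ⟨t, ⟨hxt, -⟩, rfl⟩
    rcases Sym2.mem_iff.1 hx with rfl | rfl
    · exact hxa rfl
    · exact G.irrefl hxt
  rw [Set.ncard_union_eq hdisj (Set.toFinite _) (Set.toFinite _), ncard_incidenceSet,
    Set.ncard_image_of_injective _ fun _ _ => Sym2.congr_right.1]

theorem ncard_edgesWithin_inter_edgesBetween_add_le {x a : V} (hxa : G.Adj x a) :
    (edgesWithin G (G.neighborSet x ∪ G.neighborSet a) ∩
        edgesBetween G (G.neighborSet x) (insert x (G.neighborSet x))ᶜ).ncard +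
      (G.degree x + (G.neighborSet x ∩ G.neighborSet a).ncard) ≤
    (edgesWithin G (G.neighborSet x ∪ G.neighborSet a)).ncard := by
  set S := G.neighborSet x ∪ G.neighborSet a
  set O := edgesBetween G (G.neighborSet x) (insert x (G.neighborSet x))ᶜ
  have hS : (edgesWithin G S).Finite := finite_edgesWithin (Set.toFinite _)
  have hdisj : Disjoint (edgesWithin G S ∩ O)
      (G.incidenceSet x ∪ (s(a, ·)) '' (G.neighborSet x ∩ G.neighborSet a)) := by
    rw [Set.disjoint_left]
    rintro _ ⟨-, -, α, w, rfl, hα, hw⟩ (⟨-, hx⟩ | ⟨t, ⟨hxt, -⟩, ht⟩)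
    · rcases Sym2.mem_iff.1 hx with rfl | rfl
      · exact G.irrefl hα
      · exact hw (Set.mem_insert _ _)
    · rcases Sym2.eq_iff.1 ht with ⟨-, rfl⟩ | ⟨rfl, -⟩
      · exact hw (Set.mem_insert_of_mem _ hxt)
      · exact hw (Set.mem_insert_of_mem _ hxa)
  rw [← ncard_incidenceSet_union_image hxa.ne,
    ← Set.ncard_union_eq hdisj (hS.inter_of_left O) (Set.toFinite _)]
  exact Set.ncard_le_ncard
    (Set.union_subset Set.inter_subset_left (incidenceSet_union_image_subset_edgesWithin hxa)) hS

theorem ncard_edgesBetween_commonNeighbors_add_le {d : ℕ} (hΔ : ∀ v, G.degree v ≤ d) {x a : V}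
    (hxa : G.Adj x a) :
    (edgesBetween G (G.neighborSet x ∩ G.neighborSet a)
        (G.neighborSet x ∪ G.neighborSet a)ᶜ).ncard +
      2 * (G.neighborSet x ∩ G.neighborSet a).ncard ≤
    d * (G.neighborSet x ∩ G.neighborSet a).ncard := by
  set S := G.neighborSet x ∪ G.neighborSet a
  obtain ⟨T, hT⟩ : ∃ T : Finset V, (T : Set V) = G.neighborSet x ∩ G.neighborSet a :=
    (Set.toFinite (G.neighborSet x ∩ G.neighborSet a)).exists_finset_coe
  have two_le : ∀ t ∈ T, 2 ≤ (G.neighborSet t \ Sᶜ).ncard := by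
    intro t ht
    obtain ⟨hxt, hat⟩ : t ∈ G.neighborSet x ∩ G.neighborSet a := hT ▸ ht
    rw [← Set.ncard_pair hxa.ne, Set.sdiff_compl]
    refine Set.ncard_le_ncard (Set.pair_subset ?_ ?_) (Set.toFinite _)
    · exact ⟨hxt.symm, .inr hxa.symm⟩
    · exact ⟨hat.symm, .inl hxa⟩
  rw [← hT, Set.ncard_coe_finset]
  calc
    _ ≤ (edgesBetween G T Sᶜ).ncard + ∑ t ∈ T, (G.neighborSet t \ Sᶜ).ncard := by
      grw [← Finset.card_nsmul_le_sum T _ 2 two_le, smul_eq_mul, mul_comm]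
    _ ≤ ∑ t ∈ T, G.degree t := ncard_edgesBetween_add_sum_le T Sᶜ
    _ ≤ d * T.card := by
      grw [Finset.sum_le_card_nsmul T _ d fun t _ => hΔ t, smul_eq_mul, mul_comm]

theorem ncard_edgesBetween_inter_edgesTouching_add_ncard_CSet_le {d : ℕ}
    (hΔ : ∀ v, G.degree v ≤ d) {x a : V} (hxa : G.Adj x a) :
    (edgesBetween G (G.neighborSet x) (insert x (G.neighborSet x))ᶜ ∩
        edgesTouching G (G.neighborSet a)).ncard + (CSet G s(x, a)).ncard +
      G.degree x + 3 * (G.neighborSet x ∩ G.neighborSet a).ncard ≤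
    d * (G.degree x + G.degree a) := by
  have hCSet := ncard_CSet_add_ncard_edgesWithin_union_le hΔ hxa
  have hwithin := ncard_edgesWithin_inter_edgesBetween_add_le hxa
  have hbetween := ncard_edgesBetween_commonNeighbors_add_le hΔ hxa
  set O := edgesBetween G (G.neighborSet x) (insert x (G.neighborSet x))ᶜ
  set S := G.neighborSet x ∪ G.neighborSet a
  set T := G.neighborSet x ∩ G.neighborSet a
  have hTfin : T.Finite := Set.toFinite _
  have hSfin : S.Finite := Set.toFinite _
  have hsub : O ∩ edgesTouching G (G.neighborSet a) ⊆
      edgesWithin G S ∩ O ∪ edgesBetween G T Sᶜ := by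
    rintro _ ⟨⟨he, α, w, rfl, hα, hw⟩, -, v, hv, hav⟩
    by_cases haw : G.Adj a w
    · exact .inl ⟨mk_mem_edgesWithin.2 ⟨he, .inl hα, .inr haw⟩, he, α, w, rfl, hα, hw⟩
    · obtain rfl : v = α := (Sym2.mem_iff.1 hv).resolve_right fun h => haw (h ▸ hav)
      refine .inr ⟨he, v, w, rfl, ⟨hα, hav⟩, ?_⟩
      exact fun h => h.elim (fun hxw => hw (Set.mem_insert_of_mem _ hxw)) haw
  have hbetween_fin : (edgesBetween G T Sᶜ).Finite :=
    (finite_edgesTouching hTfin).subset fun _ ⟨he, t, w, hew, ht, _⟩ =>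
      ⟨he, t, hew ▸ Sym2.mem_mk_left t w, ht⟩
  have hle := (Set.ncard_le_ncard hsub
    (((finite_edgesWithin hSfin).inter_of_left O).union hbetween_fin)).trans
      (Set.ncard_union_le _ _)
  omega

end LocallyFinite

section PairwiseConflict

variable {G : SimpleGraph V} {U S : Set V}

theorem adj_of_pairwise_conflict (hUS : edgesWithin G U ⊆ edgesTouching G S)
    (hU : (edgesWithin G U).Pairwise (Conflict G)) {a b α w : V}
    (hab : s(a, b) ∈ edgesWithin G U) (hαw : s(α, w) ∈ edgesWithin G U) (hb : b ∉ S) (hw : w ∉ S)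
    (haα : ¬ G.Adj a α) (haw : ¬ G.Adj a w) : G.Adj α b := by
  obtain ⟨hadj, -, hbU⟩ := mk_mem_edgesWithin.1 hab
  obtain ⟨hadj', -, hwU⟩ := mk_mem_edgesWithin.1 hαw
  have hbw : ¬ G.Adj b w := by
    intro hbw
    obtain ⟨-, v, hv, hvS⟩ := hUS (mk_mem_edgesWithin.2 ⟨hbw, hbU, hwU⟩)
    rcases Sym2.mem_iff.1 hv with rfl | rfl
    · exact hb hvS
    · exact hw hvS
  have hne : s(a, b) ≠ s(α, w) := by
    intro h
    rcases Sym2.eq_iff.1 h with ⟨-, rfl⟩ | ⟨-, rfl⟩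
    · exact haw hadj
    · exact haα hadj
  obtain ⟨p, hp, q, hq, hpq⟩ := hU hab hαw hne
  rcases Sym2.mem_iff.1 hp with rfl | rfl <;> rcases Sym2.mem_iff.1 hq with rfl | rfl <;>
    grind [SimpleGraph.adj_comm]

theorem exists_inter_edgesBetween_subset_edgesTouching [G.LocallyFinite]
    (hUS : edgesWithin G U ⊆ edgesTouching G S) (hU : (edgesWithin G U).Pairwise (Conflict G))
    {A : Set V} (hAfin : A.Finite) (hA : A.Nonempty) :
    ∃ a ∈ A, edgesWithin G U ∩ edgesBetween G A Sᶜ ⊆ edgesTouching G (G.neighborSet a) := by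
  let outer : V → Set V := fun a => {b | s(a, b) ∈ edgesWithin G U ∧ b ∉ S}
  have outer_finite : ∀ a, (outer a).Finite := fun a =>
    (G.neighborSet a).toFinite.subset fun b hb => hb.1.1
  obtain ⟨a, ha, hmax⟩ := A.exists_max_image (fun a => (outer a).ncard) hAfin hA
  refine ⟨a, ha, ?_⟩
  rintro _ ⟨hαw, -, α, w, rfl, hα, hw⟩
  by_contra htouch
  have haα : ¬ G.Adj a α := fun h => htouch ⟨hαw.1, α, Sym2.mem_mk_left α w, h⟩
  have haw : ¬ G.Adj a w := fun h => htouch ⟨hαw.1, w, Sym2.mem_mk_right α w, h⟩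
  have hssub : outer a ⊂ outer α := by
    refine Set.ssubset_iff_exists.2
      ⟨fun b ⟨hab, hb⟩ => ⟨mk_mem_edgesWithin.2 ⟨?_, ?_, ?_⟩, hb⟩, w, ⟨hαw, hw⟩, ?_⟩
    · exact adj_of_pairwise_conflict hUS hU hab hαw hb hw haα haw
    · exact (mk_mem_edgesWithin.1 hαw).2.1
    · exact (mk_mem_edgesWithin.1 hab).2.2
    · exact fun h => haw h.1.1
  exact (Set.ncard_lt_ncard hssub (outer_finite α)).not_ge (hmax α hα)

end PairwiseConflict

section LocalBound

variable {G : SimpleGraph V} [G.LocallyFinite] {d : ℕ} {f g : ℝ} {x y : V} {U : Set V}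

theorem ncard_edgesWithin_inter_edgesBetween_le_of_pairwise_conflict (hΔ : ∀ v, G.degree v ≤ d)
    (hf : ∀ e ∈ G.edgeSet, f ≤ (CSet G e).ncard)
    (hg : ∀ x y, G.Adj x y → g ≤ (G.neighborSet x ∩ G.neighborSet y).ncard)
    (hxy : G.Adj x y) (hUC : edgesWithin G U ⊆ CSet G s(x, y))
    (hU : (edgesWithin G U).Pairwise (Conflict G)) :
    ((edgesWithin G U ∩ edgesBetween G (G.neighborSet x)
      (G.neighborSet x ∪ G.neighborSet y)ᶜ).ncard : ℝ) ≤ 2 * d ^ 2 - d - f - 3 * g := by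
  rw [CSet_eq_edgesTouching hxy] at hUC
  obtain ⟨a, hxa, htouch⟩ := exists_inter_edgesBetween_subset_edgesTouching hUC hU
    (G.neighborSet x).toFinite ⟨y, hxy⟩
  have hsub : edgesWithin G U ∩ edgesBetween G (G.neighborSet x)
      (G.neighborSet x ∪ G.neighborSet y)ᶜ ⊆
      edgesBetween G (G.neighborSet x) (insert x (G.neighborSet x))ᶜ ∩
        edgesTouching G (G.neighborSet a) := by
    refine Set.subset_inter (fun e he => ?_) htouch
    obtain ⟨-, hadj, α, w, rfl, hα, hw⟩ := he
    refine ⟨hadj, α, w, rfl, hα, ?_⟩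
    rintro (rfl | hxw)
    · exact hw (.inr hxy.symm)
    · exact hw (.inl hxw)
  have hle := Set.ncard_le_ncard hsub
    ((finite_edgesTouching (Set.toFinite _)).inter_of_right _)
  have hcount := ncard_edgesBetween_inter_edgesTouching_add_ncard_CSet_le hΔ hxa
  have hdeg : d * (G.degree x + G.degree a) + d ≤ 2 * d ^ 2 + G.degree x := by
    have hx_pos : 0 < G.degree x := (G.degree_pos_iff_exists_adj x).2 ⟨a, hxa⟩
    have := hΔ x
    have := hΔ a
    nlinarith
  have hbound : ((edgesWithin G U ∩ edgesBetween G (G.neighborSet x)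
      (G.neighborSet x ∪ G.neighborSet y)ᶜ).ncard + (CSet G s(x, a)).ncard +
      3 * (G.neighborSet x ∩ G.neighborSet a).ncard + d : ℝ) ≤ 2 * d ^ 2 := by
    norm_cast
    omega
  linarith [hf s(x, a) hxa, hg x a hxa]

theorem ncard_CSet_add_ncard_edgesWithin_le_of_pairwise_conflict (hΔ : ∀ v, G.degree v ≤ d)
    (hf : ∀ e ∈ G.edgeSet, f ≤ (CSet G e).ncard)
    (hg : ∀ x y, G.Adj x y → g ≤ (G.neighborSet x ∩ G.neighborSet y).ncard)
    (hxy : G.Adj x y) (hUC : edgesWithin G U ⊆ CSet G s(x, y))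
    (hU : (edgesWithin G U).Pairwise (Conflict G)) :
    ((CSet G s(x, y)).ncard + (edgesWithin G U).ncard : ℝ) ≤
      2 * (3 * d ^ 2 - d - f - ((d + 6) / 2) * g) := by
  set S := G.neighborSet x ∪ G.neighborSet y with hS
  have hx := ncard_edgesWithin_inter_edgesBetween_le_of_pairwise_conflict hΔ hf hg hxy hUC hU
  have hy := ncard_edgesWithin_inter_edgesBetween_le_of_pairwise_conflict hΔ hf hg hxy.symm
    (Sym2.eq_swap ▸ hUC) hU
  rw [Set.union_comm] at hy
  rw [← hS] at hx hy
  have hcover := edgesWithin_subset_of_subset_edgesTouching_union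
    (CSet_eq_edgesTouching hxy ▸ hUC)
  have hUfin : (edgesWithin G U).Finite := (finite_CSet hxy).subset hUC
  have hncard : (edgesWithin G U).ncard ≤ (edgesWithin G S).ncard +
      ((edgesWithin G U ∩ edgesBetween G (G.neighborSet x) Sᶜ).ncard +
        (edgesWithin G U ∩ edgesBetween G (G.neighborSet y) Sᶜ).ncard) := by
    grw [← Set.ncard_union_le, ← Set.ncard_union_le]
    exact Set.ncard_le_ncard hcover ((finite_edgesWithin (Set.toFinite _)).union
      ((hUfin.inter_of_left _).union (hUfin.inter_of_left _)))
  have hCSet : (CSet G s(x, y)).ncard + (edgesWithin G S).ncard +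
      d * (G.neighborSet x ∩ G.neighborSet y).ncard ≤ 2 * d ^ 2 := by
    refine (ncard_CSet_add_ncard_edgesWithin_union_le hΔ hxy).trans ?_
    nlinarith [hΔ x, hΔ y]
  have hdg : d * g ≤ d * (G.neighborSet x ∩ G.neighborSet y).ncard :=
    mul_le_mul_of_nonneg_left (hg x y hxy) d.cast_nonneg
  rify at hncard hCSet
  linarith

theorem ncard_CSet_add_ncard_PCSet_le (hΔ : ∀ v, G.degree v ≤ d)
    (hf : ∀ e ∈ G.edgeSet, f ≤ (CSet G e).ncard)
    (hg : ∀ x y, G.Adj x y → g ≤ (G.neighborSet x ∩ G.neighborSet y).ncard)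
    {M : Set (Sym2 V)} (hcover : G.edgeSet ⊆ ⋃ e ∈ M, CSet G e) (hstab : LSStable G M)
    {e : Sym2 V} (heM : e ∈ M) (heG : e ∈ G.edgeSet) :
    ((CSet G e).ncard + (PCSet G M e).ncard : ℝ) ≤
      2 * (3 * d ^ 2 - d - f - ((d + 6) / 2) * g) := by
  have hsub : PCSet G M e ⊆ CSet G e := Set.sdiff_subset
  have hpair : (PCSet G M e).Pairwise (Conflict G) := fun h hh h' hh' hne =>
    (hstab e heM h hh h' hh' hne).2
  rw [PCSet_eq_edgesWithin_privateVertices hcover] at hsub hpair ⊢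
  induction e with | _ x y
  exact ncard_CSet_add_ncard_edgesWithin_le_of_pairwise_conflict hΔ hf hg heG hsub hpair

theorem two_mul_ncard_edgeSet_le {M : Finset (Sym2 V)} (hM : (M : Set (Sym2 V)) ⊆ G.edgeSet)
    (hcover : G.edgeSet ⊆ ⋃ e ∈ M, CSet G e) :
    2 * G.edgeSet.ncard ≤ ∑ e ∈ M, ((CSet G e).ncard + (PCSet G M e).ncard) := by
  have hE : G.edgeSet = ⋃ e ∈ M, CSet G e :=
    hcover.antisymm (Set.iUnion₂_subset fun _ _ _ hh => hh.1)
  grw [hE, two_mul_ncard_biUnion_le M (CSet G) fun e he => finite_CSet (hM he)]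
  rfl

end LocalBound

theorem stmt6_general (G : SimpleGraph V) (d : ℕ) (hΔ : ∀ v, (G.neighborSet v).encard ≤ d)
    (M : Set (Sym2 V)) (hfin : M.Finite) (hM : M ⊆ G.edgeSet)
    (hcover : G.edgeSet ⊆ ⋃ e ∈ M, CSet G e) (hstab : LSStable G M) (f g : ℝ)
    (hf : ∀ e ∈ G.edgeSet, f ≤ ((CSet G e).ncard : ℝ))
    (hg : ∀ x y : V, G.Adj x y → g ≤ ((G.neighborSet x ∩ G.neighborSet y).ncard : ℝ)) :
    (M.ncard : ℝ) ≥
      (G.edgeSet.ncard : ℝ) / (3 * d ^ 2 - d - f - ((d + 6) / 2) * g) := by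
  have : G.LocallyFinite := fun v => (Set.finite_of_encard_le_coe (hΔ v)).fintype
  have hdeg : ∀ v, G.degree v ≤ d := fun v => by
    rw [← ncard_neighborSet]
    exact (Set.encard_le_coe_iff_finite_ncard_le.1 (hΔ v)).2
  lift M to Finset (Sym2 V) using hfin
  set D : ℝ := 3 * d ^ 2 - d - f - ((d + 6) / 2) * g
  have hle : (G.edgeSet.ncard : ℝ) ≤ (M : Set (Sym2 V)).ncard * D := by
    suffices (2 * G.edgeSet.ncard : ℝ) ≤ M.card * (2 * D) by
      rw [Set.ncard_coe_finset]
      linarith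
    calc
      (2 * G.edgeSet.ncard : ℝ) ≤ ∑ e ∈ M, ((CSet G e).ncard + (PCSet G M e).ncard : ℝ) :=
        mod_cast two_mul_ncard_edgeSet_le hM hcover
      _ ≤ M.card • (2 * D) := M.sum_le_card_nsmul _ _ fun e he =>
        ncard_CSet_add_ncard_PCSet_le hdeg hf hg hcover hstab he (hM he)
      _ = M.card * (2 * D) := nsmul_eq_mul _ _
  rcases le_total 0 D with hD | hD
  · exact div_le_of_le_mul₀ hD (Nat.cast_nonneg _) hle
  · exact (div_nonpos_of_nonneg_of_nonpos (Nat.cast_nonneg _) hD).trans (Nat.cast_nonneg _)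

/-- lower bound on the size of a locally optimal induced matching. -/
theorem stmt6 [Fintype V] (G : SimpleGraph V) (d : ℕ) (hd : 3 ≤ d)
    (hΔ : ∀ v : V, (G.neighborSet v).ncard ≤ d)
    (M : Set (Sym2 V)) (hmax : IsMaximalInducedMatching G M) (hstab : LSStable G M)
    (f g : ℝ)
    (hf : ∀ e ∈ G.edgeSet, f ≤ ((CSet G e).ncard : ℝ))
    (hg : ∀ x y : V, G.Adj x y → g ≤ ((G.neighborSet x ∩ G.neighborSet y).ncard : ℝ)) :
    (M.ncard : ℝ) ≥
      (G.edgeSet.ncard : ℝ) / (3 * d ^ 2 - d - f - ((d + 6) / 2) * g) :=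
  stmt6_general G d (fun v => Set.encard_le_coe_iff_finite_ncard_le.2 ⟨Set.toFinite _, hΔ v⟩)
    M M.toFinite hmax.1.1 hmax.edgeSet_subset_biUnion_CSet hstab f g hf hg
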